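/- Let Ω be a finite nonempty set, t ∈ [1/2, 1), μ a probability measure on Ω, and σ a selection function on Ω that μ represents for threshold t. Let X_1, …, X_n ⊆ Ω (n ≥ 1) with μ(X_i) > 0 for each i, and suppose X_i\X_j ⊆ σ(X_i) for all i ≠ j. Then the set ⋃_{i≤n} σ(X_i) is (μ_{⋃_{i≤n}X_i}, t)-stable, and consequently σ(⋃_{i≤n} X_i) ⊆ ⋃_{i≤n} σ(X_i) (the weak Or rule). -/

import Mathlib

open Finset

variable {Ω : Type*}

/-- The measure of a finite set of states given weights `w`: `μ(A) = ∑_{ω ∈ A} w ω`. -/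
noncomputable def mea (w : Ω → ℝ) (A : Finset Ω) : ℝ := ∑ ω ∈ A, w ω

/-- `w` is a probability weight function: nonnegative and summing to 1. -/
def IsProbWeight [Fintype Ω] (w : Ω → ℝ) : Prop :=
  (∀ ω, 0 ≤ w ω) ∧ (∑ ω, w ω) = 1

/-- The measure is regular: only the empty set has measure 0. -/
def RegularW (w : Ω → ℝ) : Prop := ∀ X : Finset Ω, mea w X = 0 → X = ∅

/-- Conditional measure `μ_A(X) = μ(A ∩ X) / μ(A)`. -/
noncomputable def condMea [DecidableEq Ω] (w : Ω → ℝ) (A X : Finset Ω) : ℝ := mea w (A ∩ X) / mea w A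

/-- `X` is `(m,t)`-stable for a set function `m`: `X` is nonempty and for every `E` with
`X ∩ E ≠ ∅` and `m E > 0`, `m (X ∩ E) / m E > t`. -/
def StableFor [DecidableEq Ω] (m : Finset Ω → ℝ) (t : ℝ) (X : Finset Ω) : Prop :=
  X.Nonempty ∧ ∀ E : Finset Ω, (X ∩ E).Nonempty → 0 < m E → t < m (X ∩ E) / m E

/-- `S` is the `⊆`-least `(m,t)`-stable set. -/
def IsLeastStable [DecidableEq Ω] (m : Finset Ω → ℝ) (t : ℝ) (S : Finset Ω) : Prop :=
  StableFor m t S ∧ ∀ X : Finset Ω, StableFor m t X → S ⊆ X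

/-- `w` represents the selection function `σ` for threshold `t`. -/
def RepresentsAt [DecidableEq Ω] (w : Ω → ℝ) (t : ℝ) (σ : Finset Ω → Finset Ω) : Prop :=
  ∀ E : Finset Ω, (0 < mea w E → IsLeastStable (condMea w E) t (σ E)) ∧
    (mea w E = 0 → σ E = ∅)

/-- Selection axiom (S1): `σ(X) = ∅` only if `X = ∅`. -/
def SelA1 (σ : Finset Ω → Finset Ω) : Prop := ∀ X : Finset Ω, σ X = ∅ → X = ∅

/-- Selection axiom (S2): `σ(X) ⊆ X`. -/
def SelA2 (σ : Finset Ω → Finset Ω) : Prop := ∀ X : Finset Ω, σ X ⊆ X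

/-- Selection axiom (S3): if `σ(A) ∩ B ≠ ∅` then `σ(A ∩ B) ⊆ σ(A) ∩ B`. -/
def SelA3 [DecidableEq Ω] (σ : Finset Ω → Finset Ω) : Prop :=
  ∀ A B : Finset Ω, (σ A ∩ B).Nonempty → σ (A ∩ B) ⊆ σ A ∩ B

/-- Selection axiom (S4ₙ) for every `n`: if `σ(A ∪ Xᵢ) = Xᵢ` for all `i`, then
`σ(A ∪ ⋃ᵢ Xᵢ) ⊆ ⋃ᵢ Xᵢ`. -/
def SelA4 [DecidableEq Ω] (σ : Finset Ω → Finset Ω) : Prop :=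
  ∀ n : ℕ, ∀ A : Finset Ω, ∀ X : Fin (n + 1) → Finset Ω,
    (∀ i, σ (A ∪ X i) = X i) →
    σ (A ∪ univ.biUnion X) ⊆ univ.biUnion X

/-- `ω ≻_σ X` iff `ω ∉ X` and `σ (X ∪ {ω}) = {ω}`. -/
def succS [DecidableEq Ω] (σ : Finset Ω → Finset Ω) (ω : Ω) (X : Finset Ω) : Prop :=
  ω ∉ X ∧ σ (X ∪ {ω}) = {ω}

/-- `X ⪰_σ ω` iff `ω ∈ X` or `σ (X ∪ {ω}) ≠ {ω}`. -/
def succeqS [DecidableEq Ω] (σ : Finset Ω → Finset Ω) (X : Finset Ω) (ω : Ω) : Prop :=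
  ω ∈ X ∨ σ (X ∪ {ω}) ≠ {ω}

/-- `A ⪰*_σ B` iff either `A` is a singleton `{a}` with `a ≻_σ B`, or `B` is a singleton
`{b}` with `A ⪰_σ b`. -/
def geStar [DecidableEq Ω] (σ : Finset Ω → Finset Ω) (A B : Finset Ω) : Prop :=
  (∃ a, A = {a} ∧ succS σ a B) ∨ (∃ b, B = {b} ∧ succeqS σ A b)

/-- Two sequences of sets are balanced: every state occurs in exactly as many `A i`'s
as `B i`'s. -/
def BalancedSeq {n : ℕ} (A B : Fin n → Finset Ω) : Prop :=
  ∀ ω : Ω, Nat.card {i // ω ∈ A i} = Nat.card {i // ω ∈ B i}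

/-- `(A_i) ≤₀ (B_i)`: every state occurs in at most as many `A i`'s as `B i`'s. -/
def DomSeq {n : ℕ} (A B : Fin n → Finset Ω) : Prop :=
  ∀ ω : Ω, Nat.card {i // ω ∈ A i} ≤ Nat.card {i // ω ∈ B i}

/-- The (Scott) axiom for the induced order `⪰*_σ`. -/
def ScottAx [DecidableEq Ω] (σ : Finset Ω → Finset Ω) : Prop :=
  ∀ n : ℕ, ∀ A B : Fin (n + 1) → Finset Ω, BalancedSeq A B →
    (∀ i, geStar σ (A i) (B i)) → ∀ i, geStar σ (B i) (A i)

/-!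
Let `U = ⋃ⱼ Xⱼ`. A state of `U` outside every `σ(Xⱼ)` lies in every `Xᵢ`: if it were in `Xⱼ \ Xᵢ`,
it would be selected by `σ(Xⱼ)`. So, for an event `E` meeting `σ(Xᵢ)`, passing from `Xᵢ ∩ E` to
`U ∩ E` can only add mass to the selected part and remove mass from the unselected part. Hence the
conditional probability of the selected part is at least its value in `Xᵢ ∩ E`, which exceeds `t`.
If `Xᵢ ∩ E` is null, the unselected part of `U ∩ E` is null too and that probability is `1`, while
stability of `σ(Xᵢ)` itself forces `t < 1`.
-/

section Measure

variable {w : Ω → ℝ}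

theorem mea_mono (hw : ∀ ω, 0 ≤ w ω) : Monotone (mea w) :=
  fun _ _ hAB => sum_le_sum_of_subset_of_nonneg hAB fun ω _ _ => hw ω

theorem mea_nonneg (hw : ∀ ω, 0 ≤ w ω) (A : Finset Ω) : 0 ≤ mea w A :=
  sum_nonneg fun ω _ => hw ω

variable [DecidableEq Ω]

theorem mea_inter_add_mea_sdiff (w : Ω → ℝ) (A S : Finset Ω) :
    mea w (A ∩ S) + mea w (A \ S) = mea w A :=
  sum_inter_add_sum_sdiff A S w

theorem mea_biUnion_pos (hw : ∀ ω, 0 ≤ w ω) {ι : Type*} {I : Finset ι} {X : ι → Finset Ω}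
    (hX : ∃ i ∈ I, 0 < mea w (X i)) : 0 < mea w (I.biUnion X) := by
  obtain ⟨i, hi, hXi⟩ := hX
  exact hXi.trans_le (mea_mono hw (subset_biUnion_of_mem X hi))

theorem mea_inter_div_mea_eq_one {A S : Finset Ω} (hA : mea w A ≠ 0) (hAS : mea w (A \ S) = 0) :
    mea w (A ∩ S) / mea w A = 1 := by
  rw [div_eq_one_iff_eq hA, ← mea_inter_add_mea_sdiff w A S, hAS, add_zero]

theorem mea_inter_div_mea_le (hw : ∀ ω, 0 ≤ w ω) {A B S T : Finset Ω}
    (hA : 0 < mea w A) (hB : 0 < mea w B) (hin : A ∩ S ⊆ B ∩ T) (hout : B \ T ⊆ A \ S) :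
    mea w (A ∩ S) / mea w A ≤ mea w (B ∩ T) / mea w B := by
  rw [div_le_div_iff₀ hA hB, ← mea_inter_add_mea_sdiff w A S, ← mea_inter_add_mea_sdiff w B T]
  have cross : mea w (A ∩ S) * mea w (B \ T) ≤ mea w (B ∩ T) * mea w (A \ S) :=
    mul_le_mul (mea_mono hw hin) (mea_mono hw hout) (mea_nonneg hw _) (mea_nonneg hw _)
  linarith

theorem condMea_mono (hw : ∀ ω, 0 ≤ w ω) (A : Finset Ω) : Monotone (condMea w A) :=
  fun _ _ hBC => div_le_div_of_nonneg_right (mea_mono hw (inter_subset_inter_left hBC))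
    (mea_nonneg hw A)

theorem condMea_self {A : Finset Ω} (hA : mea w A ≠ 0) : condMea w A A = 1 := by
  rw [condMea, inter_self, div_self hA]

end Measure

section Stability

variable [DecidableEq Ω] {w : Ω → ℝ} {t : ℝ}

theorem StableFor.lt_one {m : Finset Ω → ℝ} (hm : Monotone m) {A S : Finset Ω} (hA : 0 < m A)
    (hS : StableFor m t S) : t < 1 := by
  have hSA : 0 < m (S ∪ A) := hA.trans_le (hm subset_union_right)
  have hmeet : (S ∩ (S ∪ A)).Nonempty := by
    rw [inter_eq_left.2 subset_union_left]
    exact hS.1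
  exact (hS.2 (S ∪ A) hmeet hSA).trans_le ((div_le_one hSA).2 (hm inter_subset_right))

theorem stableFor_condMea_iff {A S : Finset Ω} (hA : 0 < mea w A) :
    StableFor (condMea w A) t S ↔ S.Nonempty ∧ ∀ E : Finset Ω, (S ∩ E).Nonempty →
      0 < mea w (A ∩ E) → t < mea w (A ∩ E ∩ S) / mea w (A ∩ E) := by
  simp only [StableFor, condMea, div_pos_iff_of_pos_right hA, div_div_div_cancel_right₀ hA.ne',
    inter_comm S, inter_assoc]

variable {ι : Type*} {I : Finset ι} {X S : ι → Finset Ω}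

theorem biUnion_sdiff_biUnion_subset (hXS : (I : Set ι).Pairwise fun i j => X i \ X j ⊆ S i)
    {i : ι} (hi : i ∈ I) : I.biUnion X \ I.biUnion S ⊆ X i \ S i := by
  intro ω hω
  obtain ⟨hωX, hωS⟩ := mem_sdiff.1 hω
  have hunselected : ∀ j ∈ I, ω ∉ S j := fun j hj hωj => hωS (mem_biUnion.2 ⟨j, hj, hωj⟩)
  obtain ⟨j, hj, hωj⟩ := mem_biUnion.1 hωX
  refine mem_sdiff.2 ⟨?_, hunselected i hi⟩
  by_contra hωi
  have hji : j ≠ i := fun hji => hωi (hji ▸ hωj)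
  exact hunselected j hj (hXS hj hi hji (mem_sdiff.2 ⟨hωj, hωi⟩))

theorem stableFor_condMea_biUnion (hw : ∀ ω, 0 ≤ w ω) (hI : I.Nonempty)
    (hpos : ∀ i ∈ I, 0 < mea w (X i)) (hS : ∀ i ∈ I, StableFor (condMea w (X i)) t (S i))
    (hXS : (I : Set ι).Pairwise fun i j => X i \ X j ⊆ S i) :
    StableFor (condMea w (I.biUnion X)) t (I.biUnion S) := by
  obtain ⟨k, hk⟩ := hI
  have hU : 0 < mea w (I.biUnion X) := mea_biUnion_pos hw ⟨k, hk, hpos k hk⟩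
  refine (stableFor_condMea_iff hU).2 ⟨(hS k hk).1.mono (subset_biUnion_of_mem S hk), ?_⟩
  rintro E ⟨ω, hω⟩ hUE
  obtain ⟨hωS, hωE⟩ := mem_inter.1 hω
  obtain ⟨i, hi, hωi⟩ := mem_biUnion.1 hωS
  have hin : X i ∩ E ∩ S i ⊆ I.biUnion X ∩ E ∩ I.biUnion S := by
    gcongr <;> exact subset_biUnion_of_mem _ hi
  have hout : (I.biUnion X ∩ E) \ I.biUnion S ⊆ (X i ∩ E) \ S i := by
    simpa only [sdiff_inter_right_comm] using
      inter_subset_inter_right (u := E) (biUnion_sdiff_biUnion_subset hXS hi)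
  rcases (mea_nonneg hw (X i ∩ E)).eq_or_lt with hnull | hXE
  · have hrest : mea w ((I.biUnion X ∩ E) \ I.biUnion S) = 0 :=
      le_antisymm ((mea_mono hw (hout.trans sdiff_subset)).trans hnull.ge) (mea_nonneg hw _)
    rw [mea_inter_div_mea_eq_one hUE.ne' hrest]
    exact (hS i hi).lt_one (condMea_mono hw (X i))
      (one_pos.trans_eq (condMea_self (hpos i hi).ne').symm)
  · calc t < mea w (X i ∩ E ∩ S i) / mea w (X i ∩ E) :=
          ((stableFor_condMea_iff (hpos i hi)).1 (hS i hi)).2 E ⟨ω, mem_inter.2 ⟨hωi, hωE⟩⟩ hXE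
      _ ≤ mea w (I.biUnion X ∩ E ∩ I.biUnion S) / mea w (I.biUnion X ∩ E) :=
          mea_inter_div_mea_le hw hXE hUE hin hout

theorem stmt13_general (hw : ∀ ω, 0 ≤ w ω) {σ : Finset Ω → Finset Ω} (hσ : RepresentsAt w t σ)
    (hI : I.Nonempty) (hpos : ∀ i ∈ I, 0 < mea w (X i))
    (hsub : (I : Set ι).Pairwise fun i j => X i \ X j ⊆ σ (X i)) :
    StableFor (condMea w (I.biUnion X)) t (I.biUnion fun i => σ (X i)) ∧
      σ (I.biUnion X) ⊆ I.biUnion fun i => σ (X i) := by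
  have hstable : StableFor (condMea w (I.biUnion X)) t (I.biUnion fun i => σ (X i)) :=
    stableFor_condMea_biUnion hw hI hpos (fun i hi => ((hσ (X i)).1 (hpos i hi)).1) hsub
  obtain ⟨k, hk⟩ := hI
  have hU : 0 < mea w (I.biUnion X) := mea_biUnion_pos hw ⟨k, hk, hpos k hk⟩
  exact ⟨hstable, ((hσ (I.biUnion X)).1 hU).2 _ hstable⟩

end Stability

/-- Observation `weakOr`, the weak Or rule: if `X_i \ X_j ⊆ σ(X_i)` for
all `i ≠ j`, then `⋃ᵢ σ(X_i)` is `(μ_{⋃ᵢ X_i}, t)`-stable and hence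
`σ(⋃ᵢ X_i) ⊆ ⋃ᵢ σ(X_i)`. -/
theorem stmt13 [Fintype Ω] [DecidableEq Ω] [Nonempty Ω]
    (t : ℝ) (ht0 : 1 / 2 ≤ t) (ht1 : t < 1)
    (w : Ω → ℝ) (hw : IsProbWeight w)
    (σ : Finset Ω → Finset Ω) (hrep : RepresentsAt w t σ)
    (n : ℕ) (X : Fin (n + 1) → Finset Ω)
    (hpos : ∀ i, 0 < mea w (X i))
    (hsub : ∀ i j, i ≠ j → X i \ X j ⊆ σ (X i)) :
    StableFor (condMea w (univ.biUnion X)) t (univ.biUnion fun i => σ (X i)) ∧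
      σ (univ.biUnion X) ⊆ univ.biUnion fun i => σ (X i) := by
  exact stmt13_general hw.1 hrep univ_nonempty (fun i _ => hpos i) fun i _ j _ hij => hsub i j hij
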